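/- Let β ∈ (1,2] be such that X_β is not sofic (1_β is not eventually periodic), and let X(S) = ASS(X_β). Then for every n ∈ ℕ, the number of points x ∈ X(S) with σ^n x = x equals the number of points x ∈ X_β with σ^n x = x, plus one: |P_n(X(S))| = |P_n(X_β)| + 1. -/

import Mathlib

/-! ## Basic symbolic dynamics over `ℤ` -/

/-- The shift map on bi-infinite sequences. -/
def shiftMap {A : Type} (x : ℤ → A) : ℤ → A := fun i => x (i + 1)

/-- The word `w` occurs in `x` starting at coordinate `i`. -/
def occursAt {A : Type} (w : List A) (x : ℤ → A) (i : ℤ) : Prop :=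
  ∀ (k : ℕ) (h : k < w.length), x (i + k) = w.get ⟨k, h⟩

/-- The word `w` occurs somewhere in `x`. -/
def occursIn {A : Type} (w : List A) (x : ℤ → A) : Prop := ∃ i : ℤ, occursAt w x i

/-- The word `w` belongs to the language of `X`. -/
def InLang {A : Type} (X : Set (ℤ → A)) (w : List A) : Prop := ∃ x ∈ X, occursIn w x

/-- `X` is a subshift: it is defined by a set of forbidden words. -/
def IsSubshift {A : Type} (X : Set (ℤ → A)) : Prop :=
  ∃ F : Set (List A), X = { x | ∀ w ∈ F, ¬ occursIn w x }

/-- `X` is a shift of finite type: defined by a finite set of forbidden words. -/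
def IsSFT {A : Type} (X : Set (ℤ → A)) : Prop :=
  ∃ F : Finset (List A), X = { x | ∀ w ∈ F, ¬ occursIn w x }

/-- `φ` is a sliding block code on `X` (with some memory `m` and anticipation `n`). -/
def IsSliding {A B : Type} (X : Set (ℤ → A)) (φ : (ℤ → A) → ℤ → B) : Prop :=
  ∃ m n : ℕ, ∀ x ∈ X, ∀ y ∈ X, ∀ i : ℤ,
    (∀ j : ℤ, i - (m : ℤ) ≤ j → j ≤ i + (n : ℤ) → x j = y j) → φ x i = φ y i

/-- `φ` is a factor code from `X` onto `Y`. -/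
def IsFactorCode {A B : Type} (X : Set (ℤ → A)) (Y : Set (ℤ → B))
    (φ : (ℤ → A) → ℤ → B) : Prop :=
  IsSliding X φ ∧ (∀ x ∈ X, φ x ∈ Y) ∧ (∀ y ∈ Y, ∃ x ∈ X, φ x = y) ∧
    (∀ x ∈ X, φ (shiftMap x) = shiftMap (φ x))

/-- `X` and `Y` are topologically conjugate (via mutually inverse sliding block codes). -/
def TopConjugate {A B : Type} (X : Set (ℤ → A)) (Y : Set (ℤ → B)) : Prop :=
  ∃ (φ : (ℤ → A) → ℤ → B) (ψ : (ℤ → B) → ℤ → A),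
    IsFactorCode X Y φ ∧ IsFactorCode Y X ψ ∧
    (∀ x ∈ X, ψ (φ x) = x) ∧ (∀ y ∈ Y, φ (ψ y) = y)

/-- `φ` is a right-resolving (1-block) code on `X`: it is induced by a symbol map `Φ`
such that whenever `ab` and `ac` are 2-blocks of `X` with `Φ b = Φ c`, then `b = c`. -/
def IsRightResolvingCode {A B : Type} (X : Set (ℤ → A)) (φ : (ℤ → A) → ℤ → B) : Prop :=
  ∃ Φ : A → B, (∀ x ∈ X, ∀ i : ℤ, φ x i = Φ (x i)) ∧
    ∀ a b c : A, InLang X [a, b] → InLang X [a, c] → Φ b = Φ c → b = c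

/-- `x` is a doubly transitive point of `X`. -/
def DoublyTransitive {A : Type} (X : Set (ℤ → A)) (x : ℤ → A) : Prop :=
  ∀ w : List A, InLang X w →
    (∀ N : ℤ, ∃ i ≥ N, occursAt w x i) ∧ (∀ N : ℤ, ∃ i ≤ N, occursAt w x i)

/-- `φ : W → Y` is one-to-one almost everywhere: every doubly transitive point of `Y`
has exactly one preimage in `W`. -/
def OneOneAE {A B : Type} (W : Set (ℤ → A)) (Y : Set (ℤ → B))
    (φ : (ℤ → A) → ℤ → B) : Prop :=
  ∀ y ∈ Y, DoublyTransitive Y y → ∃! x, x ∈ W ∧ φ x = y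

/-- `φ` is finite-to-one on `W` (uniformly bounded fibers). -/
def FiniteToOne {A B : Type} (W : Set (ℤ → A)) (φ : (ℤ → A) → ℤ → B) : Prop :=
  ∃ M : ℕ, ∀ y : ℤ → B, { x ∈ W | φ x = y }.Finite ∧ { x ∈ W | φ x = y }.ncard ≤ M

/-- `X` and `Y` are right-resolving almost conjugate. -/
def RRAlmostConjugate {A B : Type} (X : Set (ℤ → A)) (Y : Set (ℤ → B)) : Prop :=
  ∃ (C : Type) (_ : Finite C) (W : Set (ℤ → C))
    (φX : (ℤ → C) → ℤ → A) (φY : (ℤ → C) → ℤ → B),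
    IsSFT W ∧ IsFactorCode W X φX ∧ IsFactorCode W Y φY ∧
    IsRightResolvingCode W φX ∧ IsRightResolvingCode W φY ∧
    OneOneAE W X φX ∧ OneOneAE W Y φY

/-- `X` and `Y` are right-resolving finitely equivalent. -/
def RRFinEquiv {A B : Type} (X : Set (ℤ → A)) (Y : Set (ℤ → B)) : Prop :=
  ∃ (C : Type) (_ : Finite C) (W : Set (ℤ → C))
    (φX : (ℤ → C) → ℤ → A) (φY : (ℤ → C) → ℤ → B),
    IsSFT W ∧ IsFactorCode W X φX ∧ IsFactorCode W Y φY ∧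
    IsRightResolvingCode W φX ∧ IsRightResolvingCode W φY ∧
    FiniteToOne W φX ∧ FiniteToOne W φY

/-- An irreducible shift space. -/
def IrreducibleShift {A : Type} (X : Set (ℤ → A)) : Prop :=
  ∀ u w : List A, InLang X u → InLang X w → ∃ v : List A, InLang X (u ++ v ++ w)

/-- `v` is a synchronizing word for `X`. -/
def SynchronizingWord {A : Type} (X : Set (ℤ → A)) (v : List A) : Prop :=
  InLang X v ∧ ∀ u w : List A, InLang X (u ++ v) → InLang X (v ++ w) →
    InLang X (u ++ v ++ w)

/-- A synchronized system: an irreducible subshift with a synchronizing word. -/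
def Synchronized {A : Type} (X : Set (ℤ → A)) : Prop :=
  IsSubshift X ∧ IrreducibleShift X ∧ ∃ v : List A, SynchronizingWord X v

/-! ## S-gap shifts and β-shifts -/

/-- The S-gap shift `X(S)` for `S ⊆ ℕ ∪ {0}`: numbers of `0`s between successive `1`s
lie in `S`; `1`s occur infinitely often in both directions unless `S` is infinite. -/
def SGap (S : Set ℕ) : Set (ℤ → Fin 2) :=
  { x | (∀ i j : ℤ, i < j → x i = 1 → x j = 1 →
          (∀ k : ℤ, i < k → k < j → x k = 0) → (j - i - 1).toNat ∈ S) ∧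
        (S.Finite → (∀ N : ℤ, ∃ i ≥ N, x i = 1) ∧ (∀ N : ℤ, ∃ i ≤ N, x i = 1)) }

/-- Remainders of the (greedy) β-expansion of `1` with digits in `{0,1}`:
`betaRem β n = 1 - Σ_{i ≤ n} a_i β^{-i}`. -/
noncomputable def betaRem (β : ℝ) : ℕ → ℝ
  | 0 => 1
  | n + 1 => betaRem β n - (if β⁻¹ ^ (n + 1) ≤ betaRem β n then β⁻¹ ^ (n + 1) else 0)

/-- The digit `a_{n+1}` of the β-expansion `1_β = a_1 a_2 a_3 ⋯` of `1`. -/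
noncomputable def betaDigit (β : ℝ) (n : ℕ) : Fin 2 :=
  if β⁻¹ ^ (n + 1) ≤ betaRem β n then 1 else 0

/-- Lexicographic order on one-sided sequences. -/
def lexLE {A : Type} [LinearOrder A] (u v : ℕ → A) : Prop :=
  u = v ∨ ∃ n : ℕ, (∀ k < n, u k = v k) ∧ u n < v n

/-- The β-shift: `x ∈ X_β` iff every right tail of `x` is lexicographically `≤ 1_β`. -/
def betaShift (β : ℝ) : Set (ℤ → Fin 2) :=
  { x | ∀ i : ℤ, lexLE (fun n : ℕ => x (i + (n : ℤ))) (betaDigit β) }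

/-- The set `S = {i - 1 : a_i = 1}` of the associated S-gap shift `ASS(X_β) = X(S)`. -/
def assocS (β : ℝ) : Set ℕ := { n | betaDigit β n = 1 }

/-- Eventual periodicity of a sequence. -/
def EvPeriodic {α : Type} (a : ℕ → α) : Prop :=
  ∃ p : ℕ, 0 < p ∧ ∃ N : ℕ, ∀ n ≥ N, a (n + p) = a n

/-! ## Finite directed multigraphs, edge shifts, labeled graphs -/

structure FinGraph where
  V : Type
  E : Type
  [fintypeV : Fintype V]
  [fintypeE : Fintype E]
  src : E → V
  tgt : E → V

attribute [instance] FinGraph.fintypeV FinGraph.fintypeE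

/-- The edge shift of a graph. -/
def FinGraph.edgeShift (G : FinGraph) : Set (ℤ → G.E) :=
  { ξ | ∀ i : ℤ, G.tgt (ξ i) = G.src (ξ (i + 1)) }

structure GraphHom (G H : FinGraph) where
  vmap : G.V → H.V
  emap : G.E → H.E
  src_eq : ∀ e : G.E, H.src (emap e) = vmap (G.src e)
  tgt_eq : ∀ e : G.E, H.tgt (emap e) = vmap (G.tgt e)

structure GraphIso (G H : FinGraph) where
  vmap : G.V ≃ H.V
  emap : G.E ≃ H.E
  src_eq : ∀ e : G.E, H.src (emap e) = vmap (G.src e)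
  tgt_eq : ∀ e : G.E, H.tgt (emap e) = vmap (G.tgt e)

/-- `H ⪯ G` : the edge shift `X_H` is a right-resolving factor of `X_G`,
via a graph homomorphism whose restriction to each out-edge set is injective. -/
def RRFactorOf (H G : FinGraph) : Prop :=
  ∃ Φ : GraphHom G H,
    (∀ η ∈ H.edgeShift, ∃ ξ ∈ G.edgeShift, ∀ i : ℤ, Φ.emap (ξ i) = η i) ∧
    ∀ I : G.V, Set.InjOn Φ.emap { e : G.E | G.src e = I }

/-- `M` is the minimal right-resolving factor graph `M_G` of `G`: it is the smallest
element in the order `⪯` on graphs right-resolving-factoring from `G`. -/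
def IsMinFactorGraph (M G : FinGraph) : Prop :=
  RRFactorOf M G ∧ ∀ H : FinGraph, RRFactorOf H G → RRFactorOf M H

/-- The nested sequence of equivalence relations `∼ₙ` on vertices of `G` whose limiting
partition gives the states of `M_G`. -/
def simRel (G : FinGraph) : ℕ → G.V → G.V → Prop
  | 0, _, _ => True
  | n + 1, I, J => ∀ K : G.V,
      { e : G.E | G.src e = I ∧ simRel G n (G.tgt e) K }.ncard =
      { e : G.E | G.src e = J ∧ simRel G n (G.tgt e) K }.ncard

/-- The limiting equivalence relation; its classes are the states of `M_G`. -/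
def simLim (G : FinGraph) (I J : G.V) : Prop := ∀ n : ℕ, simRel G n I J

/-- A labeled graph over the alphabet `A`. -/
structure LGraph (A : Type) where
  G : FinGraph
  label : G.E → A

def LGraph.RightResolving {A : Type} (𝒢 : LGraph A) : Prop :=
  ∀ e f : 𝒢.G.E, 𝒢.G.src e = 𝒢.G.src f → 𝒢.label e = 𝒢.label f → e = f

/-- `𝒢` presents the shift space `X`: `X = ℒ_∞(X_G)`. -/
def LGraph.Presents {A : Type} (𝒢 : LGraph A) (X : Set (ℤ → A)) : Prop :=
  X = { x | ∃ ξ ∈ 𝒢.G.edgeShift, ∀ i : ℤ, 𝒢.label (ξ i) = x i }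

def FinGraph.Irreducible (G : FinGraph) : Prop :=
  ∀ I J : G.V, Relation.ReflTransGen (fun u v => ∃ e : G.E, G.src e = u ∧ G.tgt e = v) I J

/-- A sofic shift: one presented by a finite labeled graph. -/
def IsSofic {A : Type} (X : Set (ℤ → A)) : Prop := ∃ 𝒢 : LGraph A, 𝒢.Presents X

/-- The Fischer cover: the minimal right-resolving presentation of an irreducible
sofic shift. -/
def IsFischerCover {A : Type} (𝒢 : LGraph A) (X : Set (ℤ → A)) : Prop :=
  𝒢.G.Irreducible ∧ 𝒢.RightResolving ∧ 𝒢.Presents X ∧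
    ∀ ℋ : LGraph A, ℋ.RightResolving → ℋ.Presents X →
      Fintype.card 𝒢.G.V ≤ Fintype.card ℋ.G.V

/-! ## Countable labeled graphs (for almost Markov systems) -/

structure CtblLGraph (A : Type) where
  V : Type
  E : Type
  ctblV : Countable V
  ctblE : Countable E
  src : E → V
  tgt : E → V
  label : E → A

def CtblLGraph.RightResolving {A : Type} (𝒢 : CtblLGraph A) : Prop :=
  ∀ e f : 𝒢.E, 𝒢.src e = 𝒢.src f → 𝒢.label e = 𝒢.label f → e = f

def CtblLGraph.Irreducible {A : Type} (𝒢 : CtblLGraph A) : Prop :=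
  ∀ I J : 𝒢.V, Relation.ReflTransGen (fun u v => ∃ e : 𝒢.E, 𝒢.src e = u ∧ 𝒢.tgt e = v) I J

/-- `w` is the label of some finite path in `𝒢`. -/
def CtblLGraph.IsPathLabel {A : Type} (𝒢 : CtblLGraph A) (w : List A) : Prop :=
  ∃ es : List 𝒢.E, es.map 𝒢.label = w ∧ es.Chain' (fun e f => 𝒢.tgt e = 𝒢.src f)

/-- `𝒢` presents `X` (on the level of languages). -/
def CtblLGraph.PresentsLang {A : Type} (𝒢 : CtblLGraph A) (X : Set (ℤ → A)) : Prop :=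
  ∀ w : List A, InLang X w ↔ 𝒢.IsPathLabel w

/-- An almost Markov system: it has a right-resolving presentation by a countable
irreducible labeled graph. -/
def AlmostMarkov {A : Type} (X : Set (ℤ → A)) : Prop :=
  ∃ 𝒢 : CtblLGraph A, 𝒢.RightResolving ∧ 𝒢.Irreducible ∧ 𝒢.PresentsLang X

/-! ## Words `𝒟(S)`, primitivity -/

/-- The word `𝒟(S) = d_1 d_2 ⋯ d_{k-2} (d_{k-1} + s_0 + 1)` for `S = {s_0 < ⋯ < s_{k-1}}`
enumerated by `s`. -/
def DSword (k : ℕ) (s : ℕ → ℕ) : List ℕ :=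
  (List.range (k - 1)).map fun i =>
    if i + 2 < k then s (i + 1) - s i else s (i + 1) - s i + s 0 + 1

/-- The word `𝒟(S)` of a finite set `S = {s_0 < s_1 < ⋯ < s_{k-1}}` of naturals. -/
def gapWord (F : Finset ℕ) : List ℕ :=
  let l := F.sort (· ≤ ·)
  (List.range (l.length - 1)).map fun i =>
    if i + 2 < l.length then l.getD (i + 1) 0 - l.getD i 0
    else l.getD (i + 1) 0 - l.getD i 0 + l.getD 0 0 + 1

/-- `q` is a period of the word `w` (in the sense `w = u^{|w|/q}` with `|u| = q`). -/
def ListPeriod (w : List ℕ) (q : ℕ) : Prop :=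
  0 < q ∧ q ∣ w.length ∧ ∀ i : ℕ, i + q < w.length → w.getD i 0 = w.getD (i + q) 0

/-- A word is primitive if its least period equals its length. -/
def ListPrimitive (w : List ℕ) : Prop := ∀ q : ℕ, ListPeriod w q → q = w.length

/-! ## Entropy, periodic points and zeta functions -/

/-- The number of words of length `n` in the language of `X`. -/
noncomputable def wordCount {A : Type} (X : Set (ℤ → A)) (n : ℕ) : ℕ :=
  { w : List A | w.length = n ∧ InLang X w }.ncard

/-- `X` has topological entropy `h`, i.e. `(1/n) log |ℬ_n(X)| → h`. -/
def HasEntropy {A : Type} (X : Set (ℤ → A)) (h : ℝ) : Prop :=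
  Filter.Tendsto (fun n : ℕ => Real.log (wordCount X n) / n) Filter.atTop (nhds h)

/-- The topological entropy of `X`. -/
noncomputable def entropy {A : Type} (X : Set (ℤ → A)) : ℝ :=
  Filter.atTop.limsup fun n : ℕ => Real.log (wordCount X n) / n

/-- The set of points of `X` of period `n`. -/
def perPts {A : Type} (X : Set (ℤ → A)) (n : ℕ) : Set (ℤ → A) :=
  { x ∈ X | shiftMap^[n] x = x }

/-- `p_n`, the number of points of period `n`. -/
noncomputable def pcount {A : Type} (X : Set (ℤ → A)) (n : ℕ) : ℕ := (perPts X n).ncard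

/-- The exponential of a formal power series (intended for zero constant term). -/
noncomputable def expPS (g : PowerSeries ℚ) : PowerSeries ℚ :=
  PowerSeries.mk fun n =>
    ∑ k ∈ Finset.range (n + 1), (PowerSeries.coeff n (g ^ k)) / (Nat.factorial k : ℚ)

/-- The Artin–Mazur zeta function `ζ_σ(t) = exp (Σ_{n ≥ 1} (p_n / n) tⁿ)` of `X`. -/
noncomputable def zetaPS {A : Type} (X : Set (ℤ → A)) : PowerSeries ℚ :=
  expPS (PowerSeries.mk fun n => if n = 0 then 0 else (pcount X n : ℚ) / (n : ℚ))

/-! ## Continued fractions parametrization of S-gap shifts -/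

/-- The value of a finite continued fraction `[a_0; a_1, …, a_n]`. -/
def cfVal : List ℕ → ℚ
  | [] => 0
  | [a] => (a : ℚ)
  | a :: rest => (a : ℚ) + 1 / cfVal rest

/-- The sequence `d_0 = s_0`, `d_n = s_n - s_{n-1}` of gap differences of `S`. -/
noncomputable def dSeq (S : Set ℕ) (n : ℕ) : ℕ :=
  if n = 0 then Nat.nth (· ∈ S) 0 else Nat.nth (· ∈ S) n - Nat.nth (· ∈ S) (n - 1)

open scoped Classical in
/-- The real number `x_S = [d_0; d_1, d_2, …]` assigned to the S-gap shift `X(S)`. -/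
noncomputable def xOf (S : Set ℕ) : ℝ :=
  if hS : S.Finite then ((cfVal ((List.range hS.toFinset.card).map (dSeq S)) : ℚ) : ℝ)
  else Filter.atTop.limsup fun n : ℕ =>
    ((cfVal ((List.range (n + 1)).map (dSeq S)) : ℚ) : ℝ)

/-!
Write `a = 1_β` with `1 < β < 2`. Since `T_β^p 1 < 1` for `p ≥ 1`, every proper shift of `a` is
lexicographically strictly below `a`. Hence no right tail of a periodic `x ∈ X_β` equals `a`: the
tail at `i` first differs from `a` in a letter `0` where `a` has `1`, which gives a block
`a_1 ⋯ a_s 0` with `s ∈ S` starting at `i`. Because shifts of `a` are below `a`, a block starting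
inside another block also ends in it, so the maximal blocks tile `x`. Replacing each block
`a_1 ⋯ a_s 0` of this tiling by `1 0^s` is a bijection from the points of period `n` in `X_β` onto
those of `X(S)` other than `0^∞`, which lies in `X(S)` as `S` is infinite.
For `β = 2` the expansion of `1` is the periodic sequence `111⋯`.
-/

section Periodic

variable {A : Type} {B : Type*}

lemma iterate_shiftMap_apply (n : ℕ) (x : ℤ → A) (i : ℤ) : shiftMap^[n] x i = x (i + n) := by
  induction n generalizing i with
  | zero => simp
  | succ n ih =>
    rw [Function.iterate_succ_apply', shiftMap, ih, Nat.cast_succ, add_assoc, add_comm 1]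

lemma iterate_shiftMap_eq_self_iff {n : ℕ} {x : ℤ → A} :
    shiftMap^[n] x = x ↔ Function.Periodic x n := by
  simp only [funext_iff, iterate_shiftMap_apply, Function.Periodic]

lemma finite_range_of_periodic {f : ℤ → B} {c : ℤ} (hc : 0 < c)
    (hf : Function.Periodic f c) : (Set.range f).Finite :=
  hf.image_Ioc hc 0 ▸ (Set.finite_Ioc _ _).image f

lemma finite_setOf_periodic [Finite B] {c : ℤ} (hc : 0 < c) :
    {x : ℤ → B | Function.Periodic x c}.Finite := by
  refine Set.Finite.of_injOn (f := fun x (t : Set.Ico 0 c) ↦ x t) (Set.mapsTo_univ _ _) ?_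
    Set.finite_univ
  intro x hx x' hx' hxx'
  funext i
  have hagree : Function.Periodic (fun m ↦ x m = x' m) c := fun m ↦ by simp only [hx m, hx' m]
  obtain ⟨t, ht, hit⟩ := hagree.exists_mem_Ico₀ hc i
  exact hit.mpr (congrFun hxx' ⟨t, ht⟩)

end Periodic

section Adjacent

variable {C : Set ℤ} {i j i' j' m c : ℤ}

/-- `i < j` are successive elements of `C`, i.e. `[i, j)` is a gap of `C`. -/
structure AdjacentIn (C : Set ℤ) (i j : ℤ) : Prop where
  left_mem : i ∈ C
  right_mem : j ∈ C
  lt : i < j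
  notMem : ∀ m, i < m → m < j → m ∉ C

lemma exists_adjacentIn (hbelow : ¬ BddBelow C) (habove : ¬ BddAbove C) (m : ℤ) :
    ∃ i j, AdjacentIn C i j ∧ i ≤ m ∧ m < j := by
  obtain ⟨i₀, hi₀, hi₀m⟩ := not_bddBelow_iff.mp hbelow m
  obtain ⟨j₀, hj₀, hmj₀⟩ := not_bddAbove_iff.mp habove m
  obtain ⟨i, ⟨hi, him⟩, hmax⟩ := Int.exists_greatest_of_bdd (P := fun i ↦ i ∈ C ∧ i ≤ m)
    ⟨m, fun _ h ↦ h.2⟩ ⟨i₀, hi₀, hi₀m.le⟩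
  obtain ⟨j, ⟨hj, hmj⟩, hmin⟩ := Int.exists_least_of_bdd (P := fun j ↦ j ∈ C ∧ m < j)
    ⟨m, fun _ h ↦ h.2.le⟩ ⟨j₀, hj₀, hmj₀⟩
  refine ⟨i, j, ⟨hi, hj, by lia, fun k hik hkj hk ↦ ?_⟩, him, hmj⟩
  rcases le_or_gt k m with hkm | hmk
  · exact hik.not_ge (hmax k ⟨hk, hkm⟩)
  · exact hkj.not_ge (hmin k ⟨hk, hmk⟩)

lemma AdjacentIn.unique (h : AdjacentIn C i j) (h' : AdjacentIn C i' j') (him : i ≤ m)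
    (hmj : m < j) (him' : i' ≤ m) (hmj' : m < j') : i = i' ∧ j = j' := by
  obtain ⟨hi, hj, -, hgap⟩ := h
  obtain ⟨hi', hj', -, hgap'⟩ := h'
  exact ⟨le_antisymm (not_lt.mp fun hlt ↦ hgap' i hlt (him.trans_lt hmj') hi)
      (not_lt.mp fun hlt ↦ hgap i' hlt (him'.trans_lt hmj) hi'),
    le_antisymm (not_lt.mp fun hlt ↦ hgap j' (him.trans_lt hmj') hlt hj')
      (not_lt.mp fun hlt ↦ hgap' j (him'.trans_lt hmj) hlt hj)⟩

lemma AdjacentIn.add_of_periodic (hC : Function.Periodic (· ∈ C) c) (h : AdjacentIn C i j) :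
    AdjacentIn C (i + c) (j + c) where
  left_mem := (hC i).mpr h.left_mem
  right_mem := (hC j).mpr h.right_mem
  lt := add_lt_add_left h.lt c
  notMem m him hmj hm :=
    h.notMem (m - c) (by lia) (by lia) ((hC (m - c)).mp (by rwa [sub_add_cancel]))

lemma not_bddBelow_of_periodic (hc : 0 < c) (hC : Function.Periodic (· ∈ C) c)
    (hne : C.Nonempty) : ¬ BddBelow C := by
  rintro ⟨b, hb⟩
  obtain ⟨i, hi⟩ := hne
  have hle := hb ((hC.sub_int_mul_eq (|i - b| + 1) (x := i)).mpr hi)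
  rw [Int.cast_id] at hle
  nlinarith [le_abs_self (i - b), abs_nonneg (i - b)]

lemma not_bddAbove_of_periodic (hc : 0 < c) (hC : Function.Periodic (· ∈ C) c)
    (hne : C.Nonempty) : ¬ BddAbove C := by
  rintro ⟨b, hb⟩
  obtain ⟨i, hi⟩ := hne
  have hle := hb ((hC.int_mul (|b - i| + 1) i).mpr hi)
  rw [Int.cast_id] at hle
  nlinarith [le_abs_self (b - i), abs_nonneg (b - i)]

end Adjacent

section Block

variable {A : Type} [LinearOrder A] {u a : ℕ → A} {x : ℤ → A} {i j j' m c : ℤ} {k p : ℕ}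

/-- `u` is lexicographically below `a`, the two sequences first differing at index `k`. -/
def DropsAt (u a : ℕ → A) (k : ℕ) : Prop := (∀ l < k, u l = a l) ∧ u k < a k

/-- All proper shifts of `a` are lexicographically strictly below `a`. This is Parry's condition
on the expansion of `1`. -/
def StrictParry (a : ℕ → A) : Prop := ∀ p, 0 < p → ∃ r, DropsAt (fun l ↦ a (p + l)) a r

/-- The one-sided sequence `x_{[i,∞)}`. -/
def rightTail (x : ℤ → A) (i : ℤ) : ℕ → A := fun n ↦ x (i + n)

/-- The bi-infinite sequences whose right tails are all lexicographically at most `a`. The β-shift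
is `lexShift (betaDigit β)`. -/
def lexShift (a : ℕ → A) : Set (ℤ → A) := {x | ∀ i, lexLE (rightTail x i) a}

/-- The word `x_{[i,j)}` is a block: a proper prefix of `a` followed by a letter smaller than the
corresponding letter of `a`. -/
def IsBlock (a : ℕ → A) (x : ℤ → A) (i j : ℤ) : Prop :=
  ∃ k : ℕ, j = i + k + 1 ∧ DropsAt (rightTail x i) a k

/-- The positions that no block of `x` straddles. -/
def cutPoints (a : ℕ → A) (x : ℤ → A) : Set ℤ := {m | ∀ i j, i < m → IsBlock a x i j → j ≤ m}

/-- `x` is the concatenation of blocks delimited by the elements of `C`. -/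
def IsTiledBy (a : ℕ → A) (x : ℤ → A) (C : Set ℤ) : Prop :=
  ∀ ⦃i j⦄, AdjacentIn C i j → IsBlock a x i j

lemma DropsAt.unique {l : ℕ} (hk : DropsAt u a k) (hl : DropsAt u a l) : k = l := by
  rcases lt_trichotomy k l with h | h | h
  · exact absurd (hl.1 k h) hk.2.ne
  · exact h
  · exact absurd (hk.1 l h) hl.2.ne

lemma DropsAt.exists_drop_le (ha : StrictParry a) (h : DropsAt u a k) (hp : 0 < p) (hpk : p ≤ k) :
    ∃ r, p + r ≤ k ∧ DropsAt (fun l ↦ u (p + l)) a r := by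
  obtain ⟨r, hagree, hdrop⟩ := ha p hp
  obtain ⟨q, rfl⟩ := Nat.exists_eq_add_of_le hpk
  rcases lt_trichotomy r q with hrq | rfl | hqr
  · exact ⟨r, by lia, fun l hl ↦ (h.1 _ (by lia)).trans (hagree l hl),
      (h.1 _ (by lia)).trans_lt hdrop⟩
  · exact ⟨r, le_rfl, fun l hl ↦ (h.1 _ (by lia)).trans (hagree l hl), h.2.trans hdrop⟩
  · exact ⟨q, le_rfl, fun l hl ↦ (h.1 _ (by lia)).trans (hagree l (by lia)),
      h.2.trans_eq (hagree q hqr)⟩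

lemma IsBlock.lt (h : IsBlock a x i j) : i < j := by
  obtain ⟨k, rfl, -⟩ := h
  lia

lemma IsBlock.unique (h : IsBlock a x i j) (h' : IsBlock a x i j') : j = j' := by
  obtain ⟨k, rfl, hk⟩ := h
  obtain ⟨k', rfl, hk'⟩ := h'
  rw [hk.unique hk']

lemma IsBlock.exists_nested (ha : StrictParry a) (h : IsBlock a x i j) (him : i ≤ m)
    (hmj : m < j) : ∃ j' ≤ j, IsBlock a x m j' := by
  rcases him.eq_or_lt with rfl | him
  · exact ⟨j, le_rfl, h⟩
  obtain ⟨k, rfl, hk⟩ := h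
  obtain ⟨p, rfl⟩ := Int.exists_add_of_le him.le
  obtain ⟨r, hr, hdrop⟩ := hk.exists_drop_le ha (p := p) (by lia) (by lia)
  have htail : (fun l ↦ rightTail x i (p + l)) = rightTail x (i + p) :=
    funext fun l ↦ by simp only [rightTail, Nat.cast_add, add_assoc]
  exact ⟨i + p + r + 1, by lia, r, rfl, htail ▸ hdrop⟩

lemma isBlock_comp_add : IsBlock a (fun m ↦ x (m + c)) i j ↔ IsBlock a x (i + c) (j + c) := by
  have htail : rightTail (fun m ↦ x (m + c)) i = rightTail x (i + c) :=
    funext fun _ ↦ congrArg x (add_right_comm _ _ _)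
  simp only [IsBlock, htail]
  exact exists_congr fun _ ↦ and_congr_left' (by lia)

lemma isBlock_add_iff_of_periodic (hx : Function.Periodic x c) :
    IsBlock a x (i + c) (j + c) ↔ IsBlock a x i j := by
  rw [← isBlock_comp_add, funext hx]

lemma mem_lexShift_of_forall_exists_isBlock (h : ∀ i, ∃ j, IsBlock a x i j) : x ∈ lexShift a := by
  intro i
  obtain ⟨-, k, -, hk⟩ := h i
  exact .inr ⟨k, hk⟩

lemma exists_isBlock_of_periodic (ha : StrictParry a) {n : ℕ} (hn : 0 < n) (hx : x ∈ lexShift a)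
    (hper : Function.Periodic x n) (i : ℤ) : ∃ j, IsBlock a x i j := by
  rcases hx i with htail | ⟨k, hk⟩
  · obtain ⟨r, -, hdrop⟩ := ha n hn
    have hshift : a (n + r) = a r := by
      simp only [← htail, rightTail]
      rw [← hper (i + r)]
      push_cast
      ring_nf
    exact absurd hshift hdrop.ne
  · exact ⟨i + k + 1, k, rfl, hk⟩

lemma periodic_mem_cutPoints (hx : Function.Periodic x c) :
    Function.Periodic (· ∈ cutPoints a x) c := by
  intro m
  refine propext ⟨fun h i j him hij ↦ ?_, fun h i j him hij ↦ ?_⟩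
  · have := h (i + c) (j + c) (by lia) ((isBlock_add_iff_of_periodic hx).mpr hij)
    lia
  · have := h (i - c) (j - c) (by lia)
      ((isBlock_add_iff_of_periodic hx).mp (by simpa only [sub_add_cancel]))
    lia

-- A block of maximal length is nested in no other block, so it ends at a cut point.
lemma cutPoints_nonempty (ha : StrictParry a) (hc : 0 < c) (hx : Function.Periodic x c)
    (hblock : ∀ i, ∃ j, IsBlock a x i j) : (cutPoints a x).Nonempty := by
  choose e he using hblock
  have hper : Function.Periodic (fun i ↦ e i - i) c := fun i ↦ by
    have := (he (i + c)).unique ((isBlock_add_iff_of_periodic hx).mpr (he i))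
    lia
  obtain ⟨-, ⟨i₀, rfl⟩, hmax⟩ :=
    Set.exists_max_image _ id (finite_range_of_periodic hc hper) (Set.range_nonempty _)
  refine ⟨e i₀, fun i j hi hij ↦ ?_⟩
  rcases lt_or_ge i i₀ with hlt | hge
  · have hle : e i - i ≤ e i₀ - i₀ := hmax _ ⟨i, rfl⟩
    rw [hij.unique (he i)]
    lia
  · obtain ⟨j', hj', hij'⟩ := (he i₀).exists_nested ha hge hi
    rwa [hij.unique hij']

lemma IsBlock.right_mem_cutPoints (ha : StrictParry a) (h : IsBlock a x i j)
    (hi : i ∈ cutPoints a x) : j ∈ cutPoints a x := by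
  intro i' j' hi'j hblock
  rcases lt_or_ge i' i with hlt | hge
  · exact (hi i' j' hlt hblock).trans h.lt.le
  · obtain ⟨l, hl, hblock'⟩ := h.exists_nested ha hge hi'j
    rwa [hblock.unique hblock']

lemma isTiledBy_cutPoints (ha : StrictParry a) (hblock : ∀ i, ∃ j, IsBlock a x i j) :
    IsTiledBy a x (cutPoints a x) := by
  intro i j hij
  obtain ⟨j', hj'⟩ := hblock i
  have hle : j' ≤ j := hij.right_mem i j' hij.lt hj'
  have hge : j ≤ j' := not_lt.mp fun hlt ↦
    hij.notMem j' hj'.lt hlt (hj'.right_mem_cutPoints ha hij.left_mem)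
  rwa [le_antisymm hge hle]

variable {C : Set ℤ}

lemma IsTiledBy.exists_isBlock (ha : StrictParry a) (hx : IsTiledBy a x C)
    (hbelow : ¬ BddBelow C) (habove : ¬ BddAbove C) (m : ℤ) : ∃ j, IsBlock a x m j := by
  obtain ⟨i, j, hij, him, hmj⟩ := exists_adjacentIn hbelow habove m
  obtain ⟨j', -, h⟩ := (hx hij).exists_nested ha him hmj
  exact ⟨j', h⟩

lemma IsTiledBy.cutPoints_eq (ha : StrictParry a) (hx : IsTiledBy a x C)
    (hbelow : ¬ BddBelow C) (habove : ¬ BddAbove C) : cutPoints a x = C := by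
  ext m
  refine ⟨fun hm ↦ ?_, fun hm i j him hij ↦ ?_⟩
  · obtain ⟨i, j, hij, him, hmj⟩ := exists_adjacentIn hbelow habove m
    rcases him.eq_or_lt with rfl | him
    · exact hij.left_mem
    · exact absurd (hm i j him (hx hij)) hmj.not_ge
  · obtain ⟨i', j', hij', hi', hj'⟩ := exists_adjacentIn hbelow habove i
    obtain ⟨l, hl, hil⟩ := (hx hij').exists_nested ha hi' hj'
    have hjm : j' ≤ m := not_lt.mp fun hlt ↦ hij'.notMem m (by lia) hlt hm
    rw [hij.unique hil]
    exact hl.trans hjm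

end Block

section Binary

variable {a : ℕ → Fin 2} {x x' : ℤ → Fin 2} {C : Set ℤ} {i j c : ℤ} {n : ℕ}

lemma isBlock_iff : IsBlock a x i j ↔ i < j ∧ a (j - i - 1).toNat = 1 ∧
    ∀ m, i ≤ m → m < j → x m = if m + 1 = j then 0 else a (m - i).toNat := by
  constructor
  · rintro ⟨k, rfl, hagree, hdrop⟩
    simp only [rightTail] at hagree hdrop
    refine ⟨by lia, ?_, fun m him hmj ↦ ?_⟩
    · rw [show (i + k + 1 - i - 1).toNat = k by lia]
      lia
    · obtain ⟨l, rfl⟩ := Int.exists_add_of_le him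
      split_ifs with hl
      · obtain rfl : l = k := by lia
        lia
      · rw [hagree l (by lia), add_sub_cancel_left, Int.toNat_natCast]
  · rintro ⟨hij, hlast, hx⟩
    refine ⟨(j - i - 1).toNat, by lia, fun l hl ↦ ?_, ?_⟩
    · rw [rightTail, hx _ (by lia) (by lia), if_neg (by lia), add_sub_cancel_left,
        Int.toNat_natCast]
    · rw [rightTail, hx _ (by lia) (by lia), if_pos (by lia), hlast]
      decide

lemma IsTiledBy.ext (hx : IsTiledBy a x C) (hx' : IsTiledBy a x' C) (hbelow : ¬ BddBelow C)
    (habove : ¬ BddAbove C) : x = x' := by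
  funext m
  obtain ⟨i, j, hij, him, hmj⟩ := exists_adjacentIn hbelow habove m
  rw [(isBlock_iff.mp (hx hij)).2.2 m him hmj, (isBlock_iff.mp (hx' hij)).2.2 m him hmj]

lemma exists_isTiledBy (hbelow : ¬ BddBelow C) (habove : ¬ BddAbove C)
    (hgap : ∀ i j, AdjacentIn C i j → a (j - i - 1).toNat = 1) :
    ∃ x : ℤ → Fin 2, IsTiledBy a x C := by
  choose l r hadj hl hr using exists_adjacentIn hbelow habove
  refine ⟨fun m ↦ if m + 1 = r m then 0 else a (m - l m).toNat, fun i j hij ↦ ?_⟩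
  refine isBlock_iff.mpr ⟨hij.lt, hgap i j hij, fun m him hmj ↦ ?_⟩
  obtain ⟨rfl, rfl⟩ := hij.unique (hadj m) him hmj (hl m) (hr m)
  rfl

lemma IsTiledBy.periodic (hx : IsTiledBy a x C) (hC : Function.Periodic (· ∈ C) c)
    (hbelow : ¬ BddBelow C) (habove : ¬ BddAbove C) : Function.Periodic x c := by
  have hshift : IsTiledBy a (fun m ↦ x (m + c)) C :=
    fun _ _ hij ↦ isBlock_comp_add.mpr (hx (hij.add_of_periodic hC))
  exact congrFun (hshift.ext hx hbelow habove)

lemma mem_sGap_iff_of_infinite {S : Set ℕ} (hS : S.Infinite) :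
    x ∈ SGap S ↔ ∀ i j, AdjacentIn {m | x m = 1} i j → (j - i - 1).toNat ∈ S := by
  constructor
  · rintro ⟨hgap, -⟩ i j ⟨hi, hj, hij, hzero⟩
    refine hgap i j hij hi hj fun m him hmj ↦ ?_
    have : x m ≠ 1 := hzero m him hmj
    lia
  · refine fun hgap ↦ ⟨fun i j hij hi hj hzero ↦ hgap i j ⟨hi, hj, hij, fun m him hmj ↦ ?_⟩,
      fun hfin ↦ absurd hfin hS⟩
    simp [hzero m him hmj]

lemma zero_mem_perPts_sGap {S : Set ℕ} (hS : S.Infinite) (n : ℕ) : 0 ∈ perPts (SGap S) n :=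
  ⟨(mem_sGap_iff_of_infinite hS).mpr fun _ _ h ↦ absurd h.left_mem zero_ne_one,
    iterate_shiftMap_eq_self_iff.mpr fun _ ↦ rfl⟩

/-- The binary sequence marking the cut points of `x` by `1`. It replaces every block of length
`s + 1` in the tiling of `x` by `1 0^s`. -/
noncomputable def cutSeq (a : ℕ → Fin 2) (x : ℤ → Fin 2) : ℤ → Fin 2 :=
  (cutPoints a x).indicator 1

lemma cutSeq_eq_one_iff : cutSeq a x i = 1 ↔ i ∈ cutPoints a x := by
  classical
  simp [cutSeq, Set.indicator_apply]

lemma setOf_cutSeq_eq_one : {m | cutSeq a x m = 1} = cutPoints a x :=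
  Set.ext fun _ ↦ cutSeq_eq_one_iff

lemma mapsTo_cutSeq (ha : StrictParry a) (hinf : {k | a k = 1}.Infinite) (hn : 0 < n) :
    Set.MapsTo (cutSeq a) (perPts (lexShift a) n) (perPts (SGap {k | a k = 1}) n \ {0}) := by
  rintro x ⟨hx, hper⟩
  rw [iterate_shiftMap_eq_self_iff] at hper
  have hblock := exists_isBlock_of_periodic ha hn hx hper
  refine ⟨⟨(mem_sGap_iff_of_infinite hinf).mpr fun i j hij ↦ ?_, ?_⟩, fun hzero ↦ ?_⟩
  · rw [setOf_cutSeq_eq_one] at hij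
    exact (isBlock_iff.mp (isTiledBy_cutPoints ha hblock hij)).2.1
  · refine iterate_shiftMap_eq_self_iff.mpr fun m ↦ ?_
    have hcut : m + n ∈ cutPoints a x ↔ m ∈ cutPoints a x := (periodic_mem_cutPoints hper m).to_iff
    classical
    simp only [cutSeq, Set.indicator_apply, hcut, Pi.one_apply]
  · obtain ⟨m, hm⟩ := cutPoints_nonempty ha (by lia) hper hblock
    rw [← cutSeq_eq_one_iff, Set.mem_singleton_iff.mp hzero] at hm
    exact zero_ne_one hm

lemma injOn_cutSeq (ha : StrictParry a) (hn : 0 < n) :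
    Set.InjOn (cutSeq a) (perPts (lexShift a) n) := by
  rintro x ⟨hx, hper⟩ x' ⟨hx', hper'⟩ heq
  rw [iterate_shiftMap_eq_self_iff] at hper hper'
  have hblock := exists_isBlock_of_periodic ha hn hx hper
  have hcut : cutPoints a x = cutPoints a x' := by
    rw [← setOf_cutSeq_eq_one, heq, setOf_cutSeq_eq_one]
  have hne := cutPoints_nonempty ha (by lia) hper hblock
  refine (isTiledBy_cutPoints ha hblock).ext
    (hcut ▸ isTiledBy_cutPoints ha (exists_isBlock_of_periodic ha hn hx' hper')) ?_ ?_
  · exact not_bddBelow_of_periodic (by lia) (periodic_mem_cutPoints hper) hne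
  · exact not_bddAbove_of_periodic (by lia) (periodic_mem_cutPoints hper) hne

lemma surjOn_cutSeq (ha : StrictParry a) (hinf : {k | a k = 1}.Infinite) (hn : 0 < n) :
    Set.SurjOn (cutSeq a) (perPts (lexShift a) n) (perPts (SGap {k | a k = 1}) n \ {0}) := by
  rintro y ⟨⟨hy, hper⟩, hy0⟩
  rw [iterate_shiftMap_eq_self_iff] at hper
  rw [mem_sGap_iff_of_infinite hinf] at hy
  set C : Set ℤ := {m | y m = 1} with hC
  have hCper : Function.Periodic (· ∈ C) (n : ℤ) := fun m ↦ by
    simp only [hC, Set.mem_ofPred_eq, hper m]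
  have hne : C.Nonempty := by
    obtain ⟨m, hm⟩ := Function.ne_iff.mp hy0
    exact ⟨m, Fin.eq_one_of_ne_zero _ hm⟩
  have hbelow := not_bddBelow_of_periodic (by lia) hCper hne
  have habove := not_bddAbove_of_periodic (by lia) hCper hne
  obtain ⟨x, hx⟩ := exists_isTiledBy hbelow habove hy
  refine ⟨x, ⟨mem_lexShift_of_forall_exists_isBlock (hx.exists_isBlock ha hbelow habove),
    iterate_shiftMap_eq_self_iff.mpr (hx.periodic hCper hbelow habove)⟩, funext fun m ↦ ?_⟩
  have hm : cutSeq a x m = 1 ↔ y m = 1 := by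
    rw [cutSeq_eq_one_iff, hx.cutPoints_eq ha hbelow habove, hC, Set.mem_ofPred_eq]
  lia

theorem pcount_sGap_eq_pcount_lexShift_add_one (ha : StrictParry a)
    (hinf : {k | a k = 1}.Infinite) (hn : 0 < n) :
    pcount (SGap {k | a k = 1}) n = pcount (lexShift a) n + 1 := by
  have hfin : (perPts (SGap {k | a k = 1}) n).Finite :=
    (finite_setOf_periodic (by lia)).subset fun _ hx ↦ iterate_shiftMap_eq_self_iff.mp hx.2
  have hbij : Set.BijOn (cutSeq a) (perPts (lexShift a) n) (perPts (SGap {k | a k = 1}) n \ {0}) :=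
    ⟨mapsTo_cutSeq ha hinf hn, injOn_cutSeq ha hn, surjOn_cutSeq ha hinf hn⟩
  rw [pcount, ← Set.ncard_sdiff_singleton_add_one (zero_mem_perPts_sGap hinf n) hfin,
    ← hbij.image_eq, hbij.injOn.ncard_image, pcount]

end Binary

section BetaExpansion

variable {β s t : ℝ}

/-- The β-transformation of `[0, 1]` with digits in `{0, 1}`. -/
noncomputable def betaMap (β t : ℝ) : ℝ := β * t - if 1 ≤ β * t then 1 else 0

/-- The greedy β-expansion of `t`, read off its orbit under `betaMap β`. -/
noncomputable def betaExpansion (β t : ℝ) (n : ℕ) : Fin 2 :=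
  if 1 ≤ β * (betaMap β)^[n] t then 1 else 0

lemma inv_pow_succ_le_betaRem_iff (hβ : 0 < β) (n : ℕ) :
    β⁻¹ ^ (n + 1) ≤ betaRem β n ↔ 1 ≤ β * (β ^ n * betaRem β n) := by
  rw [inv_pow, inv_le_iff_one_le_mul₀ (by positivity), mul_comm, pow_succ', mul_assoc]

lemma pow_mul_betaRem (hβ : 0 < β) (n : ℕ) : β ^ n * betaRem β n = (betaMap β)^[n] 1 := by
  induction n with
  | zero => simp [betaRem]
  | succ n ih =>
    rw [Function.iterate_succ_apply', ← ih, betaMap, betaRem]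
    simp only [inv_pow_succ_le_betaRem_iff hβ]
    split_ifs
    · rw [mul_sub, inv_pow, mul_inv_cancel₀ (by positivity)]
      ring
    · ring

lemma betaDigit_eq_betaExpansion_one (hβ : 0 < β) : betaDigit β = betaExpansion β 1 := by
  funext n
  simp only [betaDigit, betaExpansion, inv_pow_succ_le_betaRem_iff hβ, pow_mul_betaRem hβ]

lemma betaMap_mem_Icc (hβ0 : 0 ≤ β) (hβ2 : β ≤ 2) (ht : t ∈ Set.Icc 0 1) :
    betaMap β t ∈ Set.Icc 0 1 := by
  obtain ⟨ht0, ht1⟩ := ht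
  rw [betaMap]
  split_ifs <;> constructor <;> nlinarith

lemma iterate_betaMap_mem_Icc (hβ0 : 0 ≤ β) (hβ2 : β ≤ 2) (ht : t ∈ Set.Icc 0 1) (n : ℕ) :
    (betaMap β)^[n] t ∈ Set.Icc 0 1 :=
  Set.MapsTo.iterate (fun _ ↦ betaMap_mem_Icc hβ0 hβ2) n ht

lemma betaMap_lt_one (hβ0 : 0 ≤ β) (hβ2 : β < 2) (ht : t ≤ 1) : betaMap β t < 1 := by
  rw [betaMap]
  split_ifs <;> nlinarith

lemma iterate_betaMap_sub_iterate_betaMap {r : ℕ}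
    (h : ∀ k < r, betaExpansion β s k = betaExpansion β t k) :
    (betaMap β)^[r] t - (betaMap β)^[r] s = β ^ r * (t - s) := by
  induction r with
  | zero => simp
  | succ r ih =>
    have hdigit := h r r.lt_succ_self
    have := ih fun k hk ↦ h k (hk.trans r.lt_succ_self)
    rw [Function.iterate_succ_apply', Function.iterate_succ_apply', pow_succ', mul_assoc, ← this,
      betaMap, betaMap]
    simp only [betaExpansion] at hdigit
    split_ifs at hdigit ⊢ <;> first | ring1 | exact absurd hdigit (by decide)

-- As long as the digits agree the orbits separate by a factor `β` at each step, while both stay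
-- in `[0, 1]`.
lemma exists_dropsAt_betaExpansion (hβ1 : 1 < β) (hβ2 : β ≤ 2) (hs : s ∈ Set.Icc 0 1)
    (ht : t ∈ Set.Icc 0 1) (hst : s < t) :
    ∃ r, DropsAt (betaExpansion β s) (betaExpansion β t) r := by
  have hdiff : ∃ r, betaExpansion β s r ≠ betaExpansion β t r := by
    by_contra! hagree
    obtain ⟨r, hr⟩ := pow_unbounded_of_one_lt (t - s)⁻¹ hβ1
    have hsep := iterate_betaMap_sub_iterate_betaMap (r := r) fun k _ ↦ hagree k
    have := (iterate_betaMap_mem_Icc (by linarith) hβ2 hs r).1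
    have := (iterate_betaMap_mem_Icc (by linarith) hβ2 ht r).2
    have := (inv_lt_iff_one_lt_mul₀ (sub_pos.mpr hst)).mp hr
    linarith
  classical
  have hagree : ∀ k < Nat.find hdiff, betaExpansion β s k = betaExpansion β t k :=
    fun k hk ↦ not_not.mp (Nat.find_min hdiff hk)
  refine ⟨Nat.find hdiff, hagree, lt_of_le_of_ne ?_ (Nat.find_spec hdiff)⟩
  have hsep := iterate_betaMap_sub_iterate_betaMap hagree
  have : 0 ≤ β ^ Nat.find hdiff * (t - s) := mul_nonneg (by positivity) (by linarith)
  have hle : β * (betaMap β)^[Nat.find hdiff] s ≤ β * (betaMap β)^[Nat.find hdiff] t :=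
    mul_le_mul_of_nonneg_left (by linarith) (by linarith)
  rw [betaExpansion, betaExpansion]
  split_ifs with h₁ h₂
  · rfl
  · exact absurd (h₁.trans hle) h₂
  · exact Fin.zero_le _
  · rfl

lemma strictParry_betaDigit (hβ1 : 1 < β) (hβ2 : β < 2) : StrictParry (betaDigit β) := by
  rintro (_ | p) hp
  · contradiction
  have hone : (1 : ℝ) ∈ Set.Icc 0 1 := by simp
  have hmem := iterate_betaMap_mem_Icc (by linarith) hβ2.le hone
  have hlt : (betaMap β)^[p + 1] 1 < 1 := by
    rw [Function.iterate_succ_apply']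
    exact betaMap_lt_one (by linarith) hβ2 (hmem p).2
  obtain ⟨r, hr⟩ := exists_dropsAt_betaExpansion hβ1 hβ2.le (hmem (p + 1)) hone hlt
  have hshift : betaExpansion β ((betaMap β)^[p + 1] 1) = fun l ↦ betaExpansion β 1 (p + 1 + l) :=
    funext fun l ↦ by rw [betaExpansion, betaExpansion, ← Function.iterate_add_apply, add_comm l]
  rw [betaDigit_eq_betaExpansion_one (by linarith), ← hshift]
  exact ⟨r, hr⟩

lemma infinite_assocS_of_not_evPeriodic (h : ¬ EvPeriodic (betaDigit β)) :
    (assocS β).Infinite := by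
  intro hfin
  obtain ⟨N, hN⟩ := hfin.bddAbove
  have hzero : ∀ m > N, betaDigit β m = 0 := fun m hm ↦ by
    by_contra hne
    exact hm.not_ge (hN (Fin.eq_one_of_ne_zero _ hne))
  exact h ⟨1, one_pos, N + 1, fun m hm ↦ by rw [hzero _ (by lia), hzero _ (by lia)]⟩

lemma evPeriodic_betaDigit_two : EvPeriodic (betaDigit 2) := by
  have hfix : Function.IsFixedPt (betaMap 2) 1 := by norm_num [Function.IsFixedPt, betaMap]
  refine ⟨1, one_pos, 0, fun m _ ↦ ?_⟩
  simp only [betaDigit_eq_betaExpansion_one two_pos, betaExpansion, (hfix.iterate _).eq]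

end BetaExpansion

-- `assocS β` is infinite when the expansion of `1` is not finite, i.e. when `X_β` is not of finite
-- type.
theorem pcount_assoc_sgap_eq_pcount_beta_add_one_general (β : ℝ) (hβ1 : 1 < β) (hβ2 : β < 2)
    (h : (assocS β).Infinite) :
    ∀ n : ℕ, 1 ≤ n → pcount (SGap (assocS β)) n = pcount (betaShift β) n + 1 :=
  fun _ hn ↦ pcount_sGap_eq_pcount_lexShift_add_one (strictParry_betaDigit hβ1 hβ2) h hn

/-- If `β ∈ (1,2]` and `X_β` is not sofic (`1_β` not eventually
periodic), then for `X(S) = ASS(X_β)` and every `n ≥ 1`,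
`|P_n(X(S))| = |P_n(X_β)| + 1`. -/
theorem pcount_assoc_sgap_eq_pcount_beta_add_one
    (β : ℝ) (hβ1 : 1 < β) (hβ2 : β ≤ 2)
    (h : ¬ EvPeriodic (betaDigit β)) :
    ∀ n : ℕ, 1 ≤ n → pcount (SGap (assocS β)) n = pcount (betaShift β) n + 1 :=
  have hβ : β ≠ 2 := fun hβ ↦ h (hβ ▸ evPeriodic_betaDigit_two)
  pcount_assoc_sgap_eq_pcount_beta_add_one_general β hβ1 (hβ2.lt_of_ne hβ)
    (infinite_assocS_of_not_evPeriodic h)
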